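/- Let R be a commutative Noetherian ring with unity, I an ideal of R, and M an R-module with cohomological dimension cd(I,M) = c > 0. Then there exists an ideal J ⊊ I of R such that cd(J, M) = c − 1 and such that cd(J + Rx, M) = c for every element x ∈ I \ J. -/

import Mathlib

/-!
The ideal `J` is chosen maximal among the ideals contained in `I` of cohomological dimension at most
`c - 1`. What makes this work is that adding one generator `x` to an ideal `J` raises the
cohomological dimension by at most one. To see this, compute `H_J` as the colimit of
`Ext (R ⧸ J ^ m) M` and use the long exact sequences of
`0 ⟶ R ⧸ (J ^ m : x ^ k) ⟶ R ⧸ J ^ m ⟶ R ⧸ (J ^ m + R x ^ k) ⟶ 0`. The powers of `x` vary along with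
those of `J`, so the transition maps between the left-hand terms are multiplications by powers of
`x`. By the Artin–Rees lemma they factor through the projections `R ⧸ J ^ l ⟶ R ⧸ (J ^ m : x ^ k)`,
so a class on `R ⧸ (J ^ m : x ^ k)` dies along the system as soon as it dies on some `R ⧸ J ^ l`.
-/

universe u

open CategoryTheory

/-- The cohomological dimension of `M` with respect to `I`:
`cd(I,M) = sup { i ∈ ℕ | H^i_I(M) ≠ 0 }`, as an element of `ℕ∞`. -/
noncomputable def cohomologicalDimension {R : Type u} [CommRing R] (I : Ideal R)
    (M : ModuleCat.{u} R) : ℕ∞ :=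
  sSup {c : ℕ∞ | ∃ i : ℕ, c = i ∧ Nontrivial ((localCohomology I i).obj M)}

open Limits Opposite

section ExtComparison

variable {S : Type*} [Ring S]

lemma homologyπ_surjective {ι : Type*} {c : ComplexShape ι}
    (K : HomologicalComplex (ModuleCat S) c) (j : ι) : Function.Surjective (K.homologyπ j) :=
  (ModuleCat.epi_iff_surjective _).1 inferInstance

lemma homologyπ_eq_zero_iff_exists_d_eq {ι : Type*} {c : ComplexShape ι}
    (K : HomologicalComplex (ModuleCat S) c) {i j : ι} (hij : c.prev j = i) (z : K.cycles j) :
    K.homologyπ j z = 0 ↔ ∃ g : K.X i, K.d i j g = K.iCycles j z := by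
  have hcycles (g : K.X i) : K.iCycles j (K.toCycles i j g) = K.d i j g :=
    ConcreteCategory.congr_hom (K.toCycles_i i j) g
  have hexact : (ShortComplex.mk _ _ (K.toCycles_comp_homologyπ i j)).Exact :=
    ShortComplex.exact_of_g_is_cokernel _ (K.homologyIsCokernel i j hij)
  have hinj : Function.Injective (K.iCycles j) := (ModuleCat.mono_iff_injective _).1 inferInstance
  calc K.homologyπ j z = 0 ↔ ∃ g : K.X i, K.toCycles i j g = z :=
        (SetLike.ext_iff.1 hexact.moduleCat_range_eq_ker z).symm
    _ ↔ _ := by simp only [← hinj.eq_iff, hcycles]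

lemma exists_iCycles_eq {ι : Type*} {c : ComplexShape ι}
    (K : HomologicalComplex (ModuleCat S) c) {i j : ι} (hij : c.next i = j) {x : K.X i}
    (hx : K.d i j x = 0) : ∃ z : K.cycles i, K.iCycles i z = x :=
  (ShortComplex.moduleCat_exact_iff _).1 (ShortComplex.exact_of_f_is_kernel
    (ShortComplex.mk _ _ (K.iCycles_d i j)) (K.cyclesIsKernel i j hij)) x hx

variable {C : Type*} [Category* C] [Abelian C]

lemma extMk_zero_eq_zero_iff [HasExt C] {X Y : C} (P : ProjectiveResolution X)
    (x : P.complex.X 0 ⟶ Y) (hx : P.complex.d 1 0 ≫ x = 0) : P.extMk x 1 rfl hx = 0 ↔ x = 0 := by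
  refine ⟨fun h ↦ ?_, fun h ↦ by subst h; exact P.extMk_zero 1 rfl⟩
  rw [← P.extEquivCohomologyClass.apply_eq_iff_eq, P.extEquivCohomologyClass_extMk,
    P.extEquivCohomologyClass_zero, CochainComplex.HomComplex.CohomologyClass.mk_eq_zero_iff,
    CochainComplex.HomComplex.Cocycle.toSingleMk_mem_coboundaries_iff _ _ _ _ _ 1 (by simp)] at h
  obtain ⟨g, hg⟩ := h
  have h0 : IsZero (P.cochainComplex.X 1) :=
    P.cochainComplex.isZero_of_isStrictlyLE 0 1 (by simp)
  rw [h0.eq_of_src g 0, comp_zero] at hg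
  simpa using hg.symm

variable [Linear S C]

variable (S) in
/-- The cochain map `Hom(L, Y) ⟶ Hom(K, Y)` induced by a chain map `K ⟶ L`. -/
noncomputable def linearYonedaMap {α : Type*} [AddRightCancelSemigroup α] [One α]
    {K L : ChainComplex C α} (φ : K ⟶ L) (Y : C) :
    L.linearYonedaObj S Y ⟶ K.linearYonedaObj S Y :=
  (HomologicalComplex.unopFunctor _ _).map
    ((((linearYoneda S C).obj Y).rightOp.mapHomologicalComplex _).map φ).op

lemma isoExt_hom_naturality [EnoughProjectives C] {X X' : C} {f : X' ⟶ X}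
    {P : ProjectiveResolution X} {P' : ProjectiveResolution X'}
    (φ : ProjectiveResolution.Hom P' P f) (n : ℕ) (Y : C) :
    ((Ext S C n).map f.op).app Y ≫ (P'.isoExt n Y).hom =
      (P.isoExt n Y).hom ≫ HomologicalComplex.homologyMap (linearYonedaMap S φ.hom Y) n := by
  have hderived := congrArg Quiver.Hom.unop <| P'.isoLeftDerivedObj_inv_naturality f P φ.hom
    (by simpa using φ.hom_f_zero_comp_π_f_zero) ((linearYoneda S C).obj Y).rightOp n
  have hop := congrArg Quiver.Hom.unop <| HomologicalComplex.homologyOp_hom_naturality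
    (linearYonedaMap S φ.hom Y) n
  exact ((CommSq.mk hderived).vert_comp <| .vert_inv
    (g := HomologicalComplex.homologyUnop
      ((((linearYoneda S C).obj Y).rightOp.mapHomologicalComplex _).obj P.complex) n)
    (h := HomologicalComplex.homologyUnop
      ((((linearYoneda S C).obj Y).rightOp.mapHomologicalComplex _).obj P'.complex) n)
    (CommSq.mk hop).flip).w

lemma d_comp_iCycles (K : ChainComplex C ℕ) {Y : C} {n : ℕ}
    (z : (K.linearYonedaObj S Y).cycles n) :
    K.d (n + 1) n ≫ (K.linearYonedaObj S Y).iCycles n z = 0 :=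
  ConcreteCategory.congr_hom ((K.linearYonedaObj S Y).iCycles_d n (n + 1)) z

variable [HasExt C] {X Y : C} {n : ℕ}

/-- The class in `Abelian.Ext X Y n` of a cocycle of `Hom(P, Y)`, for a projective resolution `P`
of `X`. -/
noncomputable def cocycleClass (P : ProjectiveResolution X) (Y : C) (n : ℕ) :
    (P.complex.linearYonedaObj S Y).cycles n →+ Abelian.Ext X Y n where
  toFun z := P.extMk ((P.complex.linearYonedaObj S Y).iCycles n z) (n + 1) rfl
    (d_comp_iCycles P.complex z)
  map_zero' := by
    simp only [map_zero]
    exact P.extMk_zero (n + 1) rfl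
  map_add' z w := by
    simp only [map_add]
    exact (P.add_extMk _ _ (n + 1) rfl _ _).symm

lemma cocycleClass_surjective (P : ProjectiveResolution X) :
    Function.Surjective (cocycleClass (S := S) P Y n) := by
  intro α
  obtain ⟨x, hx, rfl⟩ := P.extMk_surjective α (n + 1) rfl
  obtain ⟨z, rfl⟩ := exists_iCycles_eq (P.complex.linearYonedaObj S Y) (by simp) hx
  exact ⟨z, rfl⟩

lemma cocycleClass_eq_zero_iff (P : ProjectiveResolution X)
    (z : (P.complex.linearYonedaObj S Y).cycles n) :
    cocycleClass P Y n z = 0 ↔ (P.complex.linearYonedaObj S Y).homologyπ n z = 0 := by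
  cases n with
  | zero =>
    have hclass : cocycleClass P Y 0 z = 0 ↔ (P.complex.linearYonedaObj S Y).iCycles 0 z = 0 :=
      extMk_zero_eq_zero_iff P _ (d_comp_iCycles P.complex z)
    rw [hclass, homologyπ_eq_zero_iff_exists_d_eq _ CochainComplex.prev_nat_zero]
    simp [eq_comm]
  | succ n =>
    rw [homologyπ_eq_zero_iff_exists_d_eq _ (CochainComplex.prev_nat_succ n)]
    exact P.extMk_eq_zero_iff _ (n + 2) rfl (d_comp_iCycles P.complex z) n rfl

lemma ker_homologyπ_eq_ker_cocycleClass (P : ProjectiveResolution X) :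
    ((P.complex.linearYonedaObj S Y).homologyπ n).hom.toAddMonoidHom.ker =
      (cocycleClass P Y n).ker := by
  ext z
  exact (cocycleClass_eq_zero_iff P z).symm

lemma mk₀_comp_cocycleClass {X' : C} {f : X' ⟶ X} {P : ProjectiveResolution X}
    {P' : ProjectiveResolution X'} (φ : ProjectiveResolution.Hom P' P f)
    (z : (P.complex.linearYonedaObj S Y).cycles n) :
    (Abelian.Ext.mk₀ f).comp (cocycleClass P Y n z) (zero_add n) =
      cocycleClass P' Y n (HomologicalComplex.cyclesMap (linearYonedaMap S φ.hom Y) n z) := by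
  have hcyc : (P'.complex.linearYonedaObj S Y).iCycles n
      (HomologicalComplex.cyclesMap (linearYonedaMap S φ.hom Y) n z) =
        φ.hom.f n ≫ (P.complex.linearYonedaObj S Y).iCycles n z :=
    ConcreteCategory.congr_hom
      (HomologicalComplex.cyclesMap_i (linearYonedaMap S φ.hom Y) n) z
  refine (ProjectiveResolution.mk₀_comp_extMk _ (n + 1) rfl (d_comp_iCycles P.complex z) φ).trans ?_
  simp only [cocycleClass, AddMonoidHom.coe_mk, ZeroHom.coe_mk, hcyc]

variable [EnoughProjectives C]

/-- The comparison between `Ext` computed by deriving `Hom(-, Y)` and `Ext` in the derived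
category, by means of a projective resolution. -/
noncomputable def extAddEquiv (P : ProjectiveResolution X) (Y : C) (n : ℕ) :
    ((Ext S C n).obj (op X)).obj Y ≃+ Abelian.Ext X Y n :=
  (P.isoExt n Y).toLinearEquiv.toAddEquiv.trans <|
    (QuotientAddGroup.quotientKerEquivOfSurjective _ (homologyπ_surjective _ n)).symm.trans <|
      (QuotientAddGroup.quotientAddEquivOfEq (ker_homologyπ_eq_ker_cocycleClass P)).trans <|
        QuotientAddGroup.quotientKerEquivOfSurjective _ (cocycleClass_surjective P)

lemma extAddEquiv_eq_cocycleClass (P : ProjectiveResolution X)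
    {a : ((Ext S C n).obj (op X)).obj Y} {z : (P.complex.linearYonedaObj S Y).cycles n}
    (h : (P.complex.linearYonedaObj S Y).homologyπ n z = (P.isoExt n Y).hom a) :
    extAddEquiv P Y n a = cocycleClass P Y n z := by
  have hmk : (QuotientAddGroup.quotientKerEquivOfSurjective
      ((P.complex.linearYonedaObj S Y).homologyπ n).hom.toAddMonoidHom
      (homologyπ_surjective _ n)).symm ((P.isoExt n Y).hom a) = QuotientAddGroup.mk z :=
    (AddEquiv.symm_apply_eq _).2 h.symm
  exact congrArg (fun q ↦ QuotientAddGroup.quotientKerEquivOfSurjective _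
    (cocycleClass_surjective P) (QuotientAddGroup.quotientAddEquivOfEq
      (ker_homologyπ_eq_ker_cocycleClass P) q)) hmk

lemma extAddEquiv_map_app {X' : C} (P : ProjectiveResolution X) (P' : ProjectiveResolution X')
    (f : X' ⟶ X) (a : ((Ext S C n).obj (op X)).obj Y) :
    extAddEquiv P' Y n (((Ext S C n).map f.op).app Y a) =
      (Abelian.Ext.mk₀ f).comp (extAddEquiv P Y n a) (zero_add n) := by
  let φ : ProjectiveResolution.Hom P' P f :=
    { hom := ProjectiveResolution.lift f P' P
      hom_f_zero_comp_π_f_zero := by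
        simpa using ProjectiveResolution.lift_commutes_zero f P' P }
  obtain ⟨z, hz⟩ := homologyπ_surjective (P.complex.linearYonedaObj S Y) n ((P.isoExt n Y).hom a)
  rw [extAddEquiv_eq_cocycleClass P hz, mk₀_comp_cocycleClass φ]
  refine extAddEquiv_eq_cocycleClass P' ?_
  rw [← ModuleCat.comp_apply, ← ModuleCat.comp_apply, isoExt_hom_naturality φ,
    ← HomologicalComplex.homologyπ_naturality, ModuleCat.comp_apply, ModuleCat.comp_apply, hz]

end ExtComparison

lemma subsingleton_isColimit_pt_iff {R : Type*} [Ring R] {J : Type*} [Category* J] [IsFiltered J]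
    {F : J ⥤ ModuleCat R} [PreservesColimit F (forget (ModuleCat R))] {c : Cocone F}
    (hc : IsColimit c) :
    Subsingleton c.pt ↔ ∀ (j : J) (x : F.obj j), ∃ (k : J) (f : j ⟶ k), F.map f x = 0 := by
  constructor
  · intro hs j x
    obtain ⟨k, f, g, hfg⟩ :=
      (Concrete.isColimit_rep_eq_iff_exists F hc x (0 : F.obj j)).1 (hs.elim _ _)
    exact ⟨k, f, hfg.trans (map_zero (F.map g).hom)⟩
  · refine fun h ↦ subsingleton_of_forall_eq 0 fun y ↦ ?_
    obtain ⟨j, x, rfl⟩ := Concrete.isColimit_exists_rep F hc y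
    obtain ⟨k, f, hf⟩ := h j x
    rw [← c.w f, ModuleCat.comp_apply, hf, map_zero]

section LocalCohomology

variable {R : Type u} [CommRing R] {A A' B D J : Ideal R} {M : ModuleCat.{u} R} {n : ℕ}

/-- The restriction `Ext (R ⧸ B) M n →+ Ext (R ⧸ A) M n` along `R ⧸ A ⟶ R ⧸ B`, for `A ≤ B`. -/
noncomputable def extRestrict (h : A ≤ B) :
    Abelian.Ext (ModuleCat.of R (R ⧸ B)) M n →+ Abelian.Ext (ModuleCat.of R (R ⧸ A)) M n :=
  (Abelian.Ext.mk₀ (ModuleCat.ofHom (Submodule.factor h))).precomp M (zero_add n)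

lemma extRestrict_extRestrict (h : A ≤ B) (h' : B ≤ D)
    (α : Abelian.Ext (ModuleCat.of R (R ⧸ D)) M n) :
    extRestrict h (extRestrict h' α) = extRestrict (h.trans h') α := by
  refine (Abelian.Ext.mk₀_comp_mk₀_assoc _ _ α).trans ?_
  rw [← ModuleCat.ofHom_comp, Submodule.factor_comp]
  rfl

lemma extRestrict_eq_zero_of_le (h : A ≤ B) {h' : B ≤ D}
    {α : Abelian.Ext (ModuleCat.of R (R ⧸ D)) M n} (hα : extRestrict h' α = 0) :
    extRestrict (h.trans h') α = 0 := by
  rw [← extRestrict_extRestrict h h', hα, map_zero]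

/-- A class in `Ext (R ⧸ A) M n`, where `A` contains a power of `J`, is `J`-negligible if its image
in `H^n_J(M) = colim_m Ext (R ⧸ J ^ m) M n` vanishes. -/
def IsNegligible (J : Ideal R) (α : Abelian.Ext (ModuleCat.of R (R ⧸ A)) M n) : Prop :=
  ∃ (m : ℕ) (h : J ^ m ≤ A), extRestrict h α = 0

lemma isNegligible_of_extRestrict {h : A ≤ B} {α : Abelian.Ext (ModuleCat.of R (R ⧸ B)) M n}
    (hα : IsNegligible J (extRestrict h α)) : IsNegligible J α := by
  obtain ⟨m, hm, hα⟩ := hα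
  exact ⟨m, hm.trans h, by rwa [← extRestrict_extRestrict hm h]⟩

lemma subsingleton_localCohomology_iff_isNegligible_pow :
    Subsingleton ((localCohomology J n).obj M) ↔
      ∀ (k : ℕ) (α : Abelian.Ext (ModuleCat.of R (R ⧸ J ^ k)) M n), IsNegligible J α := by
  let G := localCohomology.diagram (localCohomology.idealPowersDiagram J) n ⋙
    (evaluation _ _).obj M
  have hG : IsColimit (((evaluation _ _).obj M).mapCocone (colimit.cocone
      (localCohomology.diagram (localCohomology.idealPowersDiagram J) n))) :=
    isColimitOfPreserves _ (colimit.isColimit _)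
  let e (k : ℕ) := extAddEquiv (S := R) (projectiveResolution (ModuleCat.of R (R ⧸ J ^ k))) M n
  have he {k m : ℕ} (h : k ≤ m) (a : G.obj (op (op k))) :
      G.map (homOfLE h).op.op a = 0 ↔ extRestrict (Ideal.pow_le_pow_right h) (e k a) = 0 :=
    (e m).map_eq_zero_iff.symm.trans <| iff_of_eq <| congrArg (· = 0) <| extAddEquiv_map_app _ _ _ _
  have := preservesFilteredColimitsOfSize_shrink.{0, u, 0, u} (forget (ModuleCat.{u} R))
  refine (subsingleton_isColimit_pt_iff hG).trans ⟨fun h k α ↦ ?_, fun h k a ↦ ?_⟩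
  · obtain ⟨m, f, hf⟩ := h (op (op k)) ((e k).symm α)
    have hkm : k ≤ m.unop.unop := leOfHom f.unop.unop
    refine ⟨_, Ideal.pow_le_pow_right hkm, ?_⟩
    simpa using (he hkm _).1 hf
  · obtain ⟨m, hm, hα⟩ := h _ (e k.unop.unop a)
    refine ⟨op (op (max k.unop.unop m)), (homOfLE (le_max_left _ _)).op.op, (he _ a).2 ?_⟩
    exact extRestrict_eq_zero_of_le (Ideal.pow_le_pow_right (le_max_right _ _)) hα

lemma isNegligible_of_subsingleton_localCohomology
    (hJ : Subsingleton ((localCohomology J n).obj M)) {k : ℕ} (hk : J ^ k ≤ A)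
    (α : Abelian.Ext (ModuleCat.of R (R ⧸ A)) M n) : IsNegligible J α :=
  isNegligible_of_extRestrict (h := hk) (subsingleton_localCohomology_iff_isNegligible_pow.1 hJ k _)

lemma subsingleton_localCohomology_bot_succ :
    Subsingleton ((localCohomology (⊥ : Ideal R) (n + 1)).obj M) := by
  refine subsingleton_localCohomology_iff_isNegligible_pow.2 fun k α ↦
    ⟨k + 1, Ideal.pow_le_pow_right k.le_succ, ?_⟩
  have : Module.Projective R (R ⧸ (⊥ : Ideal R) ^ (k + 1)) :=
    .of_equiv (Submodule.quotEquivOfEqBot _ (by simp)).symm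
  have := (IsProjective.iff_projective (R ⧸ (⊥ : Ideal R) ^ (k + 1))).1 this
  exact Abelian.Ext.eq_zero_of_projective _

/-- Multiplication by `r` as a morphism `R ⧸ A ⟶ R ⧸ B`, when `r A ⊆ B`. -/
noncomputable def quotientMul (r : R) (h : A ≤ B.colon {r}) :
    ModuleCat.of R (R ⧸ A) ⟶ ModuleCat.of R (R ⧸ B) :=
  ModuleCat.ofHom <| Submodule.mapQ A B (LinearMap.mulRight R r) fun _ ha ↦
    Submodule.mem_colon_singleton.1 (h ha)

/-- The complex `R ⧸ (A : r) ⟶ R ⧸ A ⟶ R ⧸ (A + Rr)`. -/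
noncomputable def colonShortComplex (A : Ideal R) (r : R) : ShortComplex (ModuleCat.{u} R) where
  f := quotientMul r (le_refl (A.colon {r}))
  g := ModuleCat.ofHom (Submodule.factor (le_sup_left : A ≤ A ⊔ Ideal.span {r}))
  zero := by
    ext
    exact (Submodule.Quotient.mk_eq_zero _).2 <| Ideal.mul_mem_left _ _ <|
      Ideal.mem_sup_right (Ideal.mem_span_singleton_self r)

lemma colonShortComplex_shortExact (A : Ideal R) (r : R) : (colonShortComplex A r).ShortExact where
  exact := by
    refine (ShortComplex.moduleCat_exact_iff _).2 fun y hy ↦ ?_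
    obtain ⟨y, rfl⟩ := Submodule.Quotient.mk_surjective _ y
    obtain ⟨a, ha, b, hb, rfl⟩ := Submodule.mem_sup.1 ((Submodule.Quotient.mk_eq_zero _).1 hy)
    obtain ⟨t, rfl⟩ := Ideal.mem_span_singleton'.1 hb
    refine ⟨Submodule.Quotient.mk t, (Submodule.Quotient.eq _).2 ?_⟩
    simpa using ha
  mono_f := (ModuleCat.mono_iff_injective _).2 <| (injective_iff_map_eq_zero' _).2 fun y ↦ by
    obtain ⟨y, rfl⟩ := Submodule.Quotient.mk_surjective _ y
    refine (Submodule.Quotient.mk_eq_zero _).trans ?_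
    exact Submodule.mem_colon_singleton.symm.trans (Submodule.Quotient.mk_eq_zero _).symm
  epi_g := (ModuleCat.epi_iff_surjective _).2 <| Submodule.factor_surjective le_sup_left

lemma sup_span_mul_le (h : A' ≤ A) (r s : R) :
    A' ⊔ Ideal.span {r * s} ≤ A ⊔ Ideal.span {r} :=
  sup_le_sup h (Ideal.span_singleton_le_span_singleton.2 (dvd_mul_right r s))

lemma colon_mul_le_colon_colon (h : A' ≤ A) (r s : R) :
    A'.colon {r * s} ≤ (A.colon {r}).colon {s} := by
  intro a ha
  rw [Submodule.mem_colon_singleton] at ha ⊢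
  simpa [Submodule.mem_colon_singleton, mul_assoc, mul_comm r s] using h ha

/-- The morphism between the complexes `R ⧸ (A : r) ⟶ R ⧸ A ⟶ R ⧸ (A + Rr)` that is multiplication
by `s` on the first terms and the canonical projection on the others. -/
noncomputable def colonShortComplexMap (h : A' ≤ A) (r s : R) :
    colonShortComplex A' (r * s) ⟶ colonShortComplex A r where
  τ₁ := quotientMul s (colon_mul_le_colon_colon h r s)
  τ₂ := ModuleCat.ofHom (Submodule.factor h)
  τ₃ := ModuleCat.ofHom (Submodule.factor (sup_span_mul_le h r s))
  comm₁₂ := by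
    ext y
    obtain ⟨y, rfl⟩ := Submodule.Quotient.mk_surjective _ y
    exact congrArg (Submodule.Quotient.mk (p := A)) (by simp [mul_assoc, mul_comm r s])
  comm₂₃ := by
    simp only [colonShortComplex, ← ModuleCat.ofHom_comp, Submodule.factor_comp]

/-- The connecting homomorphism `Ext (R ⧸ (A : r)) M n →+ Ext (R ⧸ (A + Rr)) M (n + 1)`. -/
noncomputable def colonConnecting (A : Ideal R) (r : R) :
    Abelian.Ext (ModuleCat.of R (R ⧸ A.colon {r})) M n →+
      Abelian.Ext (ModuleCat.of R (R ⧸ (A ⊔ Ideal.span {r}))) M (n + 1) :=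
  (colonShortComplex_shortExact A r).extClass.precomp M (add_comm 1 n)

lemma exists_colonConnecting_eq {r : R}
    {γ : Abelian.Ext (ModuleCat.of R (R ⧸ (A ⊔ Ideal.span {r}))) M (n + 1)}
    (hγ : extRestrict (le_sup_left : A ≤ A ⊔ Ideal.span {r}) γ = 0) :
    ∃ β : Abelian.Ext (ModuleCat.of R (R ⧸ A.colon {r})) M n, colonConnecting A r β = γ :=
  Abelian.Ext.contravariant_sequence_exact₃ (colonShortComplex_shortExact A r) M γ hγ
    (add_comm 1 n)

lemma extRestrict_colonConnecting (h : A' ≤ A) (r s : R)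
    (β : Abelian.Ext (ModuleCat.of R (R ⧸ A.colon {r})) M n) :
    extRestrict (sup_span_mul_le h r s) (colonConnecting A r β) = colonConnecting A' (r * s)
      ((Abelian.Ext.mk₀ (quotientMul s (colon_mul_le_colon_colon h r s))).comp β (zero_add n)) := by
  have hnat := (colonShortComplex_shortExact A' (r * s)).extClass_naturality
    (colonShortComplex_shortExact A r) (colonShortComplexMap h r s)
  refine (Abelian.Ext.comp_assoc _ _ β (zero_add 1) (add_comm 1 n) (by omega)).symm.trans ?_
  refine (congrArg (fun γ ↦ Abelian.Ext.comp γ β (add_comm 1 n)) hnat.symm).trans ?_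
  exact Abelian.Ext.comp_assoc _ _ β (add_zero 1) (zero_add n) (by omega)

lemma mk₀_quotientMul_comp_eq_zero {s : R} {h : A ≤ D.colon {s}} (hBD : B ≤ D)
    (hAB : A ≤ B.colon {s}) {β : Abelian.Ext (ModuleCat.of R (R ⧸ D)) M n}
    (hβ : extRestrict hBD β = 0) :
    (Abelian.Ext.mk₀ (quotientMul s h)).comp β (zero_add n) = 0 := by
  have hfac : quotientMul s h = quotientMul s hAB ≫ ModuleCat.ofHom (Submodule.factor hBD) := by
    ext
    rfl
  rw [hfac, ← Abelian.Ext.mk₀_comp_mk₀_assoc]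
  exact (congrArg ((Abelian.Ext.mk₀ (quotientMul s hAB)).comp · (zero_add n)) hβ).trans
    (Abelian.Ext.comp_zero _ _ _ _ _)

lemma exists_colon_pow_le_pow_sup_colon_bot [IsNoetherianRing R] (J : Ideal R) (y : R) :
    ∃ c, ∀ l, (J ^ (l + c)).colon {y} ≤ J ^ l ⊔ (⊥ : Ideal R).colon {y} := by
  obtain ⟨c, hc⟩ := J.exists_pow_inf_eq_pow_smul (Ideal.span {y})
  refine ⟨c, fun l a ha ↦ ?_⟩
  have hmem : a * y ∈ J ^ (l + c) • (⊤ : Ideal R) ⊓ Ideal.span {y} :=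
    ⟨by simpa using Submodule.mem_colon_singleton.1 ha, Ideal.mem_span_singleton'.2 ⟨a, rfl⟩⟩
  rw [hc _ (by omega), Nat.add_sub_cancel] at hmem
  obtain ⟨b, hb, hba⟩ := Ideal.mem_mul_span_singleton.1
    (Ideal.mul_mono_right (inf_le_right : _ ≤ Ideal.span {y}) hmem)
  refine Submodule.mem_sup.2 ⟨b, hb, a - b, Submodule.mem_colon_singleton.2 ?_, by ring⟩
  simp [sub_mul, hba]

lemma exists_colon_bot_pow_le [IsNoetherianRing R] (x : R) :
    ∃ s, ∀ k, (⊥ : Ideal R).colon {x ^ k} ≤ (⊥ : Ideal R).colon {x ^ s} := by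
  let K : ℕ →o Ideal R :=
    { toFun s := (⊥ : Ideal R).colon {x ^ s}
      monotone' s t hst := by
        obtain ⟨d, rfl⟩ := Nat.exists_eq_add_of_le hst
        refine fun a ha ↦ ?_
        rw [Submodule.mem_colon_singleton] at ha ⊢
        simpa [pow_add, ← mul_assoc] using Ideal.mul_mem_right (x ^ d) _ ha }
  obtain ⟨s, hs⟩ := monotone_stabilizes_iff_noetherian.2 ‹_› K
  exact ⟨s, fun k ↦ (K.monotone (le_max_right s k)).trans (hs _ (le_max_left s k)).ge⟩

lemma exists_colon_pow_mul_pow_le [IsNoetherianRing R] (J : Ideal R) (x : R) (k l : ℕ) :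
    ∃ s m₀, ∀ m ≥ m₀, (J ^ m).colon {x ^ k * x ^ s} ≤ (J ^ l).colon {x ^ s} := by
  obtain ⟨s, hs⟩ := exists_colon_bot_pow_le x
  obtain ⟨c, hc⟩ := exists_colon_pow_le_pow_sup_colon_bot J (x ^ (k + s))
  refine ⟨s, l + c, fun m hm ↦ ?_⟩
  calc (J ^ m).colon {x ^ k * x ^ s} ≤ (J ^ (l + c)).colon {x ^ (k + s)} := by
        rw [← pow_add]
        exact Submodule.colon_mono (Ideal.pow_le_pow_right hm) subset_rfl
    _ ≤ J ^ l ⊔ (⊥ : Ideal R).colon {x ^ (k + s)} := hc l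
    _ ≤ (J ^ l).colon {x ^ s} := sup_le Ideal.le_colon
        ((hs _).trans (Submodule.colon_mono bot_le subset_rfl))

lemma isNegligible_colonConnecting [IsNoetherianRing R] {x : R} {k : ℕ}
    {β : Abelian.Ext (ModuleCat.of R (R ⧸ A.colon {x ^ k})) M n} {m : ℕ} (hA : J ^ m ≤ A)
    (hβ : IsNegligible J β) : IsNegligible (J ⊔ Ideal.span {x}) (colonConnecting A (x ^ k) β) := by
  obtain ⟨l, hl, hβl⟩ := hβ
  obtain ⟨s, m₀, hs⟩ := exists_colon_pow_mul_pow_le J x k l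
  have hle : J ^ max m m₀ ≤ A := (Ideal.pow_le_pow_right (le_max_left m m₀)).trans hA
  have hpow : (J ⊔ Ideal.span {x}) ^ (max m m₀ + (k + s)) ≤
      J ^ max m m₀ ⊔ Ideal.span {x ^ k * x ^ s} := by
    rw [← pow_add, ← Ideal.span_singleton_pow]
    exact Ideal.sup_pow_add_le_pow_sup_pow
  refine ⟨_, hpow.trans (sup_span_mul_le hle _ _),
    extRestrict_eq_zero_of_le hpow (h' := sup_span_mul_le hle _ _) ?_⟩
  rw [extRestrict_colonConnecting hle,
    mk₀_quotientMul_comp_eq_zero hl (hs _ (le_max_right m m₀)) hβl, map_zero]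

lemma subsingleton_localCohomology_sup_span_singleton [IsNoetherianRing R] (x : R)
    (h₁ : Subsingleton ((localCohomology J n).obj M))
    (h₂ : Subsingleton ((localCohomology J (n + 1)).obj M)) :
    Subsingleton ((localCohomology (J ⊔ Ideal.span {x}) (n + 1)).obj M) := by
  refine subsingleton_localCohomology_iff_isNegligible_pow.2 fun k α ↦ ?_
  obtain ⟨m, hm, hα⟩ := isNegligible_of_subsingleton_localCohomology h₂
    (Ideal.pow_right_mono le_sup_left k) α
  have hle : J ^ m ⊔ Ideal.span {x ^ k} ≤ (J ⊔ Ideal.span {x}) ^ k := by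
    rw [← Ideal.span_singleton_pow]
    exact sup_le hm (Ideal.pow_right_mono le_sup_right k)
  obtain ⟨β, hβ⟩ := exists_colonConnecting_eq (γ := extRestrict hle α)
    (by rwa [extRestrict_extRestrict])
  have hβ₀ : IsNegligible J β :=
    isNegligible_of_subsingleton_localCohomology h₁ (Ideal.le_colon (S := {x ^ k})) β
  exact isNegligible_of_extRestrict (hβ ▸ isNegligible_colonConnecting le_rfl hβ₀)

end LocalCohomology

section CohomologicalDimension

variable {R : Type u} [CommRing R]

lemma cohomologicalDimension_le_iff {I : Ideal R} {M : ModuleCat.{u} R} {d : ℕ} :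
    cohomologicalDimension I M ≤ d ↔ ∀ i, d < i → Subsingleton ((localCohomology I i).obj M) := by
  rw [cohomologicalDimension, sSup_le_iff]
  constructor
  · intro h i hi
    by_contra hn
    exact hi.not_ge <| Nat.cast_le.1 <| h i ⟨i, rfl, not_subsingleton_iff_nontrivial.1 hn⟩
  · rintro h _ ⟨i, rfl, hi⟩
    by_contra! hn
    exact not_subsingleton_iff_nontrivial.2 hi (h i (Nat.cast_lt.1 hn))

lemma cohomologicalDimension_bot (M : ModuleCat.{u} R) :
    cohomologicalDimension (⊥ : Ideal R) M = 0 := by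
  refine nonpos_iff_eq_zero.1 (cohomologicalDimension_le_iff.2 fun i hi ↦ ?_)
  obtain ⟨n, rfl⟩ := Nat.exists_eq_add_one_of_ne_zero hi.ne'
  exact subsingleton_localCohomology_bot_succ

lemma cohomologicalDimension_sup_span_singleton_le [IsNoetherianRing R] (J : Ideal R) (x : R)
    (M : ModuleCat.{u} R) :
    cohomologicalDimension (J ⊔ Ideal.span {x}) M ≤ cohomologicalDimension J M + 1 := by
  cases hJ : cohomologicalDimension J M with
  | top => simp
  | coe d =>
    have hvanish := cohomologicalDimension_le_iff.1 hJ.le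
    refine cohomologicalDimension_le_iff (d := d + 1).2 fun i hi ↦ ?_
    obtain ⟨n, rfl⟩ := Nat.exists_eq_add_one_of_ne_zero (Nat.ne_zero_of_lt hi)
    exact subsingleton_localCohomology_sup_span_singleton x (hvanish n (by omega))
      (hvanish (n + 1) (by omega))

end CohomologicalDimension

/-- if `cd(I,M) = c > 0`, there exists an ideal `J ⊊ I` with `cd(J,M) = c - 1`
such that `cd(J + Rx, M) = c` for every `x ∈ I \ J`. -/
theorem exists_maximal_ideal_with_smaller_cohomological_dimension
    (R : Type u) [CommRing R] [IsNoetherianRing R] (I : Ideal R) (M : ModuleCat.{u} R)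
    (c : ℕ) (hc : 0 < c) (hcd : cohomologicalDimension I M = (c : ℕ∞)) :
    ∃ J : Ideal R, J < I ∧ cohomologicalDimension J M = ((c - 1 : ℕ) : ℕ∞) ∧
      ∀ x ∈ I, x ∉ J → cohomologicalDimension (J + Ideal.span {x}) M = (c : ℕ∞) := by
  obtain ⟨d, rfl⟩ := Nat.exists_eq_add_one_of_ne_zero hc.ne'
  rw [Nat.add_sub_cancel, Nat.cast_succ]
  obtain ⟨J, hJ⟩ := exists_maximal_of_wellFoundedGT
    (fun J : Ideal R ↦ J ≤ I ∧ cohomologicalDimension J M ≤ d)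
    ⟨⊥, bot_le, (cohomologicalDimension_bot M).trans_le zero_le⟩
  have hlt : J < I := hJ.prop.1.lt_of_ne fun h ↦
    d.not_succ_le_self (Nat.cast_le.1 (hcd.symm.trans_le (h ▸ hJ.prop.2)))
  have hge (x : R) (hx : x ∈ I) (hxJ : x ∉ J) :
      (d + 1 : ℕ∞) ≤ cohomologicalDimension (J ⊔ Ideal.span {x}) M := by
    refine Order.add_one_le_of_lt <| not_le.1 fun hle ↦ hxJ ?_
    have hmem : J ⊔ Ideal.span {x} ≤ I := sup_le hlt.le ((Ideal.span_singleton_le_iff_mem I).2 hx)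
    exact hJ.le_of_ge ⟨hmem, hle⟩ le_sup_left
      (Ideal.mem_sup_right (Ideal.mem_span_singleton_self x))
  have hcdJ : cohomologicalDimension J M = d := by
    obtain ⟨x, hx, hxJ⟩ := SetLike.exists_of_lt hlt
    refine hJ.prop.2.antisymm <| (ENat.add_le_add_iff_right ENat.one_ne_top).1 ?_
    exact (hge x hx hxJ).trans (cohomologicalDimension_sup_span_singleton_le J x M)
  refine ⟨J, hlt, hcdJ, fun x hx hxJ ↦ le_antisymm ?_ (hge x hx hxJ)⟩
  exact (cohomologicalDimension_sup_span_singleton_le J x M).trans_eq (congrArg (· + 1) hcdJ)
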